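/- Suppose F satisfies (G1) and (G2). Let μ ∈ L_θ^+ be a positive measure with a disintegration ω along the vertical fibers, and define the path μ_F(γ) = (F_γ)_*(μ|_γ), where F_γ : K → K is the fiber map F_γ(z) = G(γ,z). Then the ‖·‖_W-Lipschitz constant of the path μ_F satisfies |μ_F|_θ ≤ |μ|_θ^ω + H ‖μ‖_∞, i.e. ess sup_{γ₁≠γ₂} ‖μ_F(γ₁) − μ_F(γ₂)‖_W / d_θ(γ₁,γ₂) ≤ |μ|_θ^ω + H‖μ‖_∞. -/

import Mathlib

open MeasureTheory ENNReal Set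

namespace RDS

/-- The one-sided subshift of finite type `Σ_A^+` determined by the 0-1 matrix `A`. -/
abbrev SigmaA (N : ℕ) (A : Fin N → Fin N → Bool) :=
  {x : ℕ → Fin N // ∀ i, A (x i) (x (i + 1)) = true}

variable {N : ℕ} {A : Fin N → Fin N → Bool}

/-- The shift map `σ` on `Σ_A^+`. -/
def shift (x : SigmaA N A) : SigmaA N A :=
  ⟨fun i => x.val (i + 1), fun i => x.prop (i + 1)⟩

/-- Aperiodicity of a 0-1 matrix: some power has all entries positive. -/
def Aperiodic (A : Fin N → Fin N → Bool) : Prop :=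
  ∃ k : ℕ, 0 < k ∧ ∀ i j,
    0 < ((Matrix.of fun a b => if A a b then (1 : ℕ) else 0) ^ k) i j

/-- The metric `d_θ(x,y) = Σ_i θ^i (1 - δ(x_i, y_i))` on `Σ_A^+`. -/
noncomputable def dTheta (θ : ℝ) (x y : SigmaA N A) : ℝ :=
  ∑' i : ℕ, θ ^ i * (if x.val i = y.val i then (0 : ℝ) else 1)

/-- Cylinder sets of `Σ_A^+`. -/
def cylinder (n : ℕ) (w : Fin (n + 1) → Fin N) : Set (SigmaA N A) :=
  {x | ∀ i : Fin (n + 1), x.val i = w i}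

/-- `m` is a Markov measure on `Σ_A^+` compatible with `A`: it is given on
cylinders by a stochastic matrix `P` (vanishing where `A` vanishes) and a
stationary probability vector `p`. -/
def IsMarkov (m : Measure (SigmaA N A)) : Prop :=
  ∃ (p : Fin N → ℝ≥0∞) (P : Fin N → Fin N → ℝ≥0∞),
    (∑ i, p i = 1) ∧ (∀ i, ∑ j, P i j = 1) ∧ (∀ j, ∑ i, p i * P i j = p j) ∧
    (∀ i j, A i j = false → P i j = 0) ∧
    ∀ (n : ℕ) (w : Fin (n + 1) → Fin N),
      m (cylinder n w) = p (w 0) * ∏ i : Fin n, P (w i.castSucc) (w i.succ)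

/-- `σ_i⁻¹(γ)`: the sequence `γ` with the symbol `i` prepended
(defined when `A i γ₀ = 1`), i.e. the inverse branch of the restriction `σ_i`
of `σ` to the cylinder `[i]`. -/
def prepend (i : Fin N) (x : SigmaA N A) (h : A i (x.val 0) = true) : SigmaA N A :=
  ⟨fun n => match n with
    | 0 => i
    | Nat.succ k => x.val k,
   fun j => match j with
    | 0 => h
    | Nat.succ k => x.prop k⟩

/-- `f` is `L`-Lipschitz with respect to the distance function `d`. -/
def LipWithD {X : Type*} (d : X → X → ℝ) (L : ℝ) (f : X → ℝ) : Prop :=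
  ∀ x y, |f x - f y| ≤ L * d x y

/-- `f` is Lipschitz with respect to the distance function `d`. -/
def LipD {X : Type*} (d : X → X → ℝ) (f : X → ℝ) : Prop :=
  ∃ L : ℝ, LipWithD d L f

/-- The best Lipschitz constant of `f` with respect to `d` (valued in `ℝ≥0∞`). -/
noncomputable def lipConst {X : Type*} (d : X → X → ℝ) (f : X → ℝ) : ℝ≥0∞ :=
  ⨆ (x : X) (y : X), ENNReal.ofReal (|f x - f y| / d x y)

/-- The sup norm of `f` (valued in `ℝ≥0∞`). -/
noncomputable def supNormE {X : Type*} (f : X → ℝ) : ℝ≥0∞ :=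
  ⨆ x : X, ENNReal.ofReal |f x|

/-- The norm `‖f‖_θ = ‖f‖_∞ + Lip_d(f)`. -/
noncomputable def thetaNorm {X : Type*} (d : X → X → ℝ) (f : X → ℝ) : ℝ≥0∞ :=
  supNormE f + lipConst d f

/-- The Perron-Frobenius operator duality characterizing `P_σ`:
`∫ P_σ(φ) · ψ dm = ∫ φ · (ψ ∘ σ) dm` for integrable `φ` and bounded measurable `ψ`. -/
def IsPerronFrobenius (m : Measure (SigmaA N A))
    (Pσ : (SigmaA N A → ℝ) → SigmaA N A → ℝ) : Prop :=
  ∀ φ ψ : SigmaA N A → ℝ, Integrable φ m → Measurable ψ → (∃ C, ∀ x, |ψ x| ≤ C) →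
    ∫ x, Pσ φ x * ψ x ∂m = ∫ x, φ x * ψ (shift x) ∂m

/-- Spectral gap for `P_σ` on `d_θ`-Lipschitz functions with constants `D`, `r`:
`‖P_σ^n φ‖_θ ≤ D r^n ‖φ‖_θ` for all `n` and all `d_θ`-Lipschitz `φ` with
`∫ φ dm = 0`. -/
def HasGap (m : Measure (SigmaA N A)) (θ : ℝ)
    (Pσ : (SigmaA N A → ℝ) → SigmaA N A → ℝ) (D r : ℝ) : Prop :=
  ∀ φ : SigmaA N A → ℝ, LipD (dTheta θ) φ → (∫ x, φ x ∂m) = 0 →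
    ∀ n : ℕ, thetaNorm (dTheta θ) (Pσ^[n] φ) ≤
      ENNReal.ofReal (D * r ^ n) * thetaNorm (dTheta θ) φ

/-- `Jm i` is the Jacobian `J_{m,σ_i}` of `m` with respect to the branch `σ_i`
(the restriction of `σ` to the cylinder `[i]`): `m (σ_i(E)) = ∫_E J_{m,σ_i} dm`
for every measurable `E` (intersected with `[i]`). -/
def IsJacobian (m : Measure (SigmaA N A)) (Jm : Fin N → SigmaA N A → ℝ) : Prop :=
  ∀ (i : Fin N) (E : Set (SigmaA N A)), MeasurableSet E →
    m {γ : SigmaA N A | ∃ h : A i (γ.val 0) = true, prepend i γ h ∈ E} =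
      ∫⁻ x in E ∩ {x : SigmaA N A | x.val 0 = i}, ENNReal.ofReal (Jm i x) ∂m

variable {K : Type*} [MetricSpace K] [MeasurableSpace K]

/-- The Wasserstein-Kantorovich like distance `W(ν₁,ν₂)`: the supremum of
`|∫ g dν₁ - ∫ g dν₂|` over `g : K → ℝ` with `Lip(g) ≤ 1` and `‖g‖_∞ ≤ 1`.
Applied with `ν₂ = 0` it gives the norm `‖ν₁‖_W`; applied to the two parts of a
decomposition of a signed measure it gives its `‖·‖_W` norm. -/
noncomputable def wDist (ν₁ ν₂ : Measure K) : ℝ≥0∞ :=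
  ⨆ g : {g : K → ℝ // LipschitzWith 1 g ∧ ∀ z, |g z| ≤ 1},
    ENNReal.ofReal |∫ z, g.val z ∂ν₁ - ∫ z, g.val z ∂ν₂|

/-- The skew product `F(x,z) = (σ(x), G(x,z))`. -/
def skew (G : SigmaA N A × K → K) (p : SigmaA N A × K) : SigmaA N A × K :=
  (shift p.1, G p)

/-- The transfer operator `F^* μ (E) = μ (F⁻¹ E)` acting on signed measures. -/
noncomputable def transfer (G : SigmaA N A × K → K)
    (μ : SignedMeasure (SigmaA N A × K)) : SignedMeasure (SigmaA N A × K) :=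
  μ.map (skew G)

/-- Condition (G1): uniform contraction of the vertical fibers with rate `α`. -/
def CondG1 (G : SigmaA N A × K → K) (α : ℝ) : Prop :=
  ∀ (x : SigmaA N A) (z₁ z₂ : K), dist (G (x, z₁)) (G (x, z₂)) ≤ α * dist z₁ z₂

/-- Condition (G2): `x ↦ G(x,z)` is `d_θ`-Lipschitz with constant `H`,
uniformly in `z`. -/
def CondG2 (θ : ℝ) (G : SigmaA N A × K → K) (H : ℝ) : Prop :=
  ∀ (z : K) (x y : SigmaA N A), dist (G (x, z)) (G (y, z)) ≤ H * dTheta θ x y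

/-- `T` is (the path `γ ↦ μ|_γ` of) a disintegration of `μ` along the vertical
fibers, over the reference measure `m`: `μ(E) = ∫ (μ|_γ)(E ∩ γ) dm(γ)`. -/
def IsDisint (m : Measure (SigmaA N A)) (μ : Measure (SigmaA N A × K))
    (T : SigmaA N A → Measure K) : Prop :=
  (∀ E : Set (SigmaA N A × K), MeasurableSet E →
      μ E = ∫⁻ γ, T γ {z | (γ, z) ∈ E} ∂m) ∧
  ∀ E : Set K, MeasurableSet E → Measurable fun γ => T γ E

/-- The (essential) `‖·‖_W`-Lipschitz constant of a path of measures,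
`|Γ|_θ^ω = ess sup_{γ₁ ≠ γ₂} ‖Γ(γ₁) - Γ(γ₂)‖_W / d_θ(γ₁,γ₂)`. -/
noncomputable def pathLip (m : Measure (SigmaA N A)) (θ : ℝ)
    (T : SigmaA N A → Measure K) : ℝ≥0∞ :=
  essSup (fun p : SigmaA N A × SigmaA N A =>
    wDist (T p.1) (T p.2) / ENNReal.ofReal (dTheta θ p.1 p.2)) (m.prod m)

/-- The Lipschitz constant `|μ|_θ` of a positive measure: the infimum over
disintegrations `ω` of `μ` of `|μ|_θ^ω`. -/
noncomputable def lipDisint (m : Measure (SigmaA N A)) (θ : ℝ)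
    (μ : Measure (SigmaA N A × K)) : ℝ≥0∞ :=
  ⨅ T : {T : SigmaA N A → Measure K // IsDisint m μ T}, pathLip m θ T.val

/-- The fiberwise transfer formula: the path representing `F^*μ` induced by the
path `T` representing `μ`, i.e.
`γ ↦ Σ_i 1_{σ([i])}(γ) (F_{iγ})_*(T(iγ)) / J_{m,σ_i}(iγ)`. -/
noncomputable def transferPath (G : SigmaA N A × K → K) (Jm : Fin N → SigmaA N A → ℝ)
    (T : SigmaA N A → Measure K) : SigmaA N A → Measure K :=
  fun γ => ∑ i : Fin N, if h : A i (γ.val 0) = true then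
      ENNReal.ofReal ((Jm i (prepend i γ h))⁻¹) •
        ((T (prepend i γ h)).map fun z => G (prepend i γ h, z))
    else 0

variable [BorelSpace K] [CompactSpace K] [Nonempty K]

/-- The fiberwise restriction `μ|_γ = π₂_* (φ₁(γ) μ_γ)` of a finite positive
measure `μ` on `Σ_A^+ × K`, where `({μ_γ}_γ, φ₁ m)` is the Rokhlin
disintegration of `μ` along the vertical fibers and `φ₁ = d(π₁_*μ)/dm`. -/
noncomputable def fiberR (m : Measure (SigmaA N A))
    (μ : Measure (SigmaA N A × K)) (γ : SigmaA N A) : Measure K := by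
  by_cases h : IsFiniteMeasure μ
  · haveI := h
    exact (μ.fst.rnDeriv m γ) • μ.condKernel γ
  · exact 0

/-- The norm `‖μ‖_∞ = ess sup_γ ‖μ|_γ‖_W` of a signed measure written as a
difference `μ = μ₁ - μ₂` of positive measures. -/
noncomputable def infNormPair (m : Measure (SigmaA N A))
    (μ₁ μ₂ : Measure (SigmaA N A × K)) : ℝ≥0∞ :=
  essSup (fun γ => wDist (fiberR m μ₁ γ) (fiberR m μ₂ γ)) m

/-- The marginal density `φ₁ = d(π₁_*μ)/dm` of the signed measure `μ = μ₁ - μ₂`. -/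
noncomputable def phiPair (m : Measure (SigmaA N A))
    (μ₁ μ₂ : Measure (SigmaA N A × K)) (γ : SigmaA N A) : ℝ :=
  (μ₁.fst.rnDeriv m γ).toReal - (μ₂.fst.rnDeriv m γ).toReal

/-- Membership in `AB`: both parts are finite with first marginal absolutely
continuous with respect to `m`. -/
def MemABPair (m : Measure (SigmaA N A)) (μ₁ μ₂ : Measure (SigmaA N A × K)) : Prop :=
  μ₁.fst ≪ m ∧ μ₂.fst ≪ m ∧ IsFiniteMeasure μ₁ ∧ IsFiniteMeasure μ₂

/-- Membership in `S^∞`: `μ ∈ AB`, `‖μ‖_∞ < ∞` and the marginal density `φ₁`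
has a `d_θ`-Lipschitz version. -/
def MemSPair (m : Measure (SigmaA N A)) (θ : ℝ)
    (μ₁ μ₂ : Measure (SigmaA N A × K)) : Prop :=
  MemABPair m μ₁ μ₂ ∧ infNormPair m μ₁ μ₂ < ⊤ ∧
    ∃ ψ : SigmaA N A → ℝ, ψ =ᵐ[m] phiPair m μ₁ μ₂ ∧ LipD (dTheta θ) ψ

/-- `‖φ₁‖_θ`, computed on the best version of the marginal density. -/
noncomputable def thetaNormMu (m : Measure (SigmaA N A)) (θ : ℝ)
    (μ₁ μ₂ : Measure (SigmaA N A × K)) : ℝ≥0∞ :=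
  ⨅ ψ : {ψ : SigmaA N A → ℝ // ψ =ᵐ[m] phiPair m μ₁ μ₂}, thetaNorm (dTheta θ) ψ.val

/-- The norm `‖μ‖_{S^∞} = ‖φ₁‖_θ + ‖μ‖_∞`. -/
noncomputable def sNormPair (m : Measure (SigmaA N A)) (θ : ℝ)
    (μ₁ μ₂ : Measure (SigmaA N A × K)) : ℝ≥0∞ :=
  thetaNormMu m θ μ₁ μ₂ + infNormPair m μ₁ μ₂

/-- Positive part of a signed measure. -/
noncomputable def jPos {X : Type*} [MeasurableSpace X] (μ : SignedMeasure X) : Measure X :=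
  μ.toJordanDecomposition.posPart

/-- Negative part of a signed measure. -/
noncomputable def jNeg {X : Type*} [MeasurableSpace X] (μ : SignedMeasure X) : Measure X :=
  μ.toJordanDecomposition.negPart

/-- Membership in `AB` for signed measures. -/
def MemAB (m : Measure (SigmaA N A)) (μ : SignedMeasure (SigmaA N A × K)) : Prop :=
  MemABPair m (jPos μ) (jNeg μ)

/-- Membership in `S^∞` for signed measures. -/
def MemS (m : Measure (SigmaA N A)) (θ : ℝ) (μ : SignedMeasure (SigmaA N A × K)) : Prop :=
  MemSPair m θ (jPos μ) (jNeg μ)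

/-- `‖μ‖_∞` for signed measures. -/
noncomputable def infNorm (m : Measure (SigmaA N A))
    (μ : SignedMeasure (SigmaA N A × K)) : ℝ≥0∞ :=
  infNormPair m (jPos μ) (jNeg μ)

/-- `‖μ‖_{S^∞}` for signed measures. -/
noncomputable def sNorm (m : Measure (SigmaA N A)) (θ : ℝ)
    (μ : SignedMeasure (SigmaA N A × K)) : ℝ≥0∞ :=
  sNormPair m θ (jPos μ) (jNeg μ)

/-- `‖φ₁‖_∞` of the marginal density of a signed measure. -/
noncomputable def phiSup (m : Measure (SigmaA N A))
    (μ : SignedMeasure (SigmaA N A × K)) : ℝ≥0∞ :=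
  essSup (fun γ => ENNReal.ofReal |phiPair m (jPos μ) (jNeg μ) γ|) m

/-!
Write `f₁`, `f₂` for the fiber maps over `γ₁`, `γ₂` and `ν₁`, `ν₂` for the fiber measures, and pass
through the intermediate measure `(f₁)_* ν₂`. Moving from `(f₁)_* ν₁` to `(f₁)_* ν₂` costs at most
`‖ν₁ - ν₂‖_W`, because composing with the nonexpansive `f₁` preserves the class of test functions.
Moving from `(f₁)_* ν₂` to `(f₂)_* ν₂` costs at most `sup_z d(f₁ z, f₂ z) ≤ H d_θ(γ₁, γ₂)` times the
mass of `ν₂`, and the mass of a positive measure is its `‖·‖_W` norm.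
-/

theorem dTheta_nonneg {θ : ℝ} (hθ : 0 ≤ θ) (x y : SigmaA N A) : 0 ≤ dTheta θ x y :=
  tsum_nonneg fun i => mul_nonneg (pow_nonneg hθ i) (by split_ifs <;> norm_num)

theorem CondG1.lipschitzWith_one {K : Type*} [MetricSpace K] {G : SigmaA N A × K → K} {α : ℝ}
    (hG : CondG1 G α) (hα : α ≤ 1) (x : SigmaA N A) :
    LipschitzWith 1 fun z => G (x, z) :=
  LipschitzWith.of_dist_le_mul fun z₁ z₂ =>
    (hG x z₁ z₂).trans (mul_le_mul_of_nonneg_right hα dist_nonneg)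

theorem IsDisint.ae_isFiniteMeasure {K : Type*} [MeasurableSpace K]
    {m : Measure (SigmaA N A)} {μ : Measure (SigmaA N A × K)} [IsFiniteMeasure μ]
    {T : SigmaA N A → Measure K} (hT : IsDisint m μ T) : ∀ᵐ γ ∂m, IsFiniteMeasure (T γ) := by
  have total_mass : μ univ = ∫⁻ γ, T γ univ ∂m := hT.1 univ MeasurableSet.univ
  have mass_finite : ∀ᵐ γ ∂m, T γ univ < ⊤ :=
    ae_lt_top (hT.2 univ MeasurableSet.univ) (total_mass ▸ measure_ne_top μ univ)
  filter_upwards [mass_finite] with γ hγ using ⟨hγ⟩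

section WDist

variable {X Y : Type*} [MetricSpace Y] [MeasurableSpace Y]

theorem ofReal_abs_integral_sub_le_wDist {g : Y → ℝ} (hg : LipschitzWith 1 g)
    (hg_bound : ∀ y, |g y| ≤ 1) (ν₁ ν₂ : Measure Y) :
    ENNReal.ofReal |∫ y, g y ∂ν₁ - ∫ y, g y ∂ν₂| ≤ wDist ν₁ ν₂ :=
  le_iSup (fun g : {g : Y → ℝ // LipschitzWith 1 g ∧ ∀ y, |g y| ≤ 1} =>
    ENNReal.ofReal |∫ y, g.val y ∂ν₁ - ∫ y, g.val y ∂ν₂|) ⟨g, hg, hg_bound⟩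

theorem wDist_le {ν₁ ν₂ : Measure Y} {c : ℝ≥0∞}
    (h : ∀ g : Y → ℝ, LipschitzWith 1 g → (∀ y, |g y| ≤ 1) →
      ENNReal.ofReal |∫ y, g y ∂ν₁ - ∫ y, g y ∂ν₂| ≤ c) :
    wDist ν₁ ν₂ ≤ c :=
  iSup_le fun g => h g.val g.prop.1 g.prop.2

theorem wDist_triangle (ν₁ ν₂ ν₃ : Measure Y) :
    wDist ν₁ ν₃ ≤ wDist ν₁ ν₂ + wDist ν₂ ν₃ := by
  refine wDist_le fun g hg hg_bound => ?_
  calc ENNReal.ofReal |∫ y, g y ∂ν₁ - ∫ y, g y ∂ν₃|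
      ≤ ENNReal.ofReal (|∫ y, g y ∂ν₁ - ∫ y, g y ∂ν₂| + |∫ y, g y ∂ν₂ - ∫ y, g y ∂ν₃|) :=
        ENNReal.ofReal_le_ofReal (abs_sub_le _ _ _)
    _ ≤ ENNReal.ofReal |∫ y, g y ∂ν₁ - ∫ y, g y ∂ν₂|
          + ENNReal.ofReal |∫ y, g y ∂ν₂ - ∫ y, g y ∂ν₃| := ENNReal.ofReal_add_le
    _ ≤ wDist ν₁ ν₂ + wDist ν₂ ν₃ :=
        add_le_add (ofReal_abs_integral_sub_le_wDist hg hg_bound ν₁ ν₂)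
          (ofReal_abs_integral_sub_le_wDist hg hg_bound ν₂ ν₃)

theorem measure_univ_le_wDist_zero (ν : Measure Y) [IsFiniteMeasure ν] : ν univ ≤ wDist ν 0 := by
  simpa [measureReal_def] using
    ofReal_abs_integral_sub_le_wDist (LipschitzWith.const' (1 : ℝ)) (by simp) ν 0

theorem wDist_map_le [MetricSpace X] [MeasurableSpace X] [OpensMeasurableSpace X] [BorelSpace Y]
    {f : X → Y} (hf : LipschitzWith 1 f) (ν₁ ν₂ : Measure X) :
    wDist (ν₁.map f) (ν₂.map f) ≤ wDist ν₁ ν₂ := by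
  refine wDist_le fun g hg hg_bound => ?_
  have hgf : LipschitzWith 1 (g ∘ f) := by simpa only [one_mul] using hg.comp hf
  rw [integral_map hf.continuous.aemeasurable hg.continuous.aestronglyMeasurable,
    integral_map hf.continuous.aemeasurable hg.continuous.aestronglyMeasurable]
  exact ofReal_abs_integral_sub_le_wDist hgf (fun x => hg_bound (f x)) ν₁ ν₂

theorem wDist_map_map_le [MeasurableSpace X] [OpensMeasurableSpace Y] {f₁ f₂ : X → Y}
    {ν : Measure X} [IsFiniteMeasure ν] (hf₁ : AEMeasurable f₁ ν) (hf₂ : AEMeasurable f₂ ν) {c : ℝ}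
    (hc : ∀ᵐ x ∂ν, dist (f₁ x) (f₂ x) ≤ c) :
    wDist (ν.map f₁) (ν.map f₂) ≤ ENNReal.ofReal c * ν univ := by
  refine wDist_le fun g hg hg_bound => ?_
  have integrable_comp {f : X → Y} (hf : AEMeasurable f ν) : Integrable (fun x => g (f x)) ν :=
    .of_bound (hg.continuous.measurable.comp_aemeasurable hf).aestronglyMeasurable 1
      (.of_forall fun x => hg_bound (f x))
  have comp_close : ∀ᵐ x ∂ν, ‖g (f₁ x) - g (f₂ x)‖ ≤ c := by
    filter_upwards [hc] with x hx
    simpa only [Real.dist_eq, Real.norm_eq_abs] using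
      (hg.dist_le_mul_of_le hx).trans_eq (one_mul c)
  rw [integral_map hf₁ hg.continuous.aestronglyMeasurable,
    integral_map hf₂ hg.continuous.aestronglyMeasurable,
    ← integral_sub (integrable_comp hf₁) (integrable_comp hf₂), ← Real.norm_eq_abs]
  calc ENNReal.ofReal ‖∫ x, (g (f₁ x) - g (f₂ x)) ∂ν‖
      ≤ ENNReal.ofReal (c * ν.real univ) :=
        ENNReal.ofReal_le_ofReal (norm_integral_le_of_norm_le_const comp_close)
    _ = ENNReal.ofReal c * ν univ := by
        rw [ENNReal.ofReal_mul' measureReal_nonneg, ofReal_measureReal]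

theorem wDist_map_map_le_add [MetricSpace X] [MeasurableSpace X] [OpensMeasurableSpace X]
    [BorelSpace Y] {f₁ f₂ : X → Y} {ν₁ ν₂ : Measure X} [IsFiniteMeasure ν₂]
    (hf₁ : LipschitzWith 1 f₁) (hf₂ : AEMeasurable f₂ ν₂) {c : ℝ}
    (hc : ∀ᵐ x ∂ν₂, dist (f₁ x) (f₂ x) ≤ c) :
    wDist (ν₁.map f₁) (ν₂.map f₂) ≤ wDist ν₁ ν₂ + ENNReal.ofReal c * wDist ν₂ 0 :=
  calc wDist (ν₁.map f₁) (ν₂.map f₂)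
      ≤ wDist (ν₁.map f₁) (ν₂.map f₁) + wDist (ν₂.map f₁) (ν₂.map f₂) := wDist_triangle _ _ _
    _ ≤ wDist ν₁ ν₂ + ENNReal.ofReal c * ν₂ univ :=
        add_le_add (wDist_map_le hf₁ ν₁ ν₂)
          (wDist_map_map_le hf₁.continuous.aemeasurable hf₂ hc)
    _ ≤ wDist ν₁ ν₂ + ENNReal.ofReal c * wDist ν₂ 0 := by
        gcongr; exact measure_univ_le_wDist_zero ν₂

end WDist

section Path

variable {K : Type*} [MetricSpace K] [MeasurableSpace K] [BorelSpace K]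

theorem wDist_map_fiber_div_le {θ : ℝ} (hθ : 0 ≤ θ) {G : SigmaA N A × K → K} {α H : ℝ}
    (hα : α ≤ 1) (hG1 : CondG1 G α) (hG2 : CondG2 θ G H) (x y : SigmaA N A)
    (ν₁ ν₂ : Measure K) [IsFiniteMeasure ν₂] :
    wDist (ν₁.map fun z => G (x, z)) (ν₂.map fun z => G (y, z)) / ENNReal.ofReal (dTheta θ x y) ≤
      wDist ν₁ ν₂ / ENNReal.ofReal (dTheta θ x y) + ENNReal.ofReal H * wDist ν₂ 0 := by
  have hlip := hG1.lipschitzWith_one hα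
  have hbound := wDist_map_map_le_add (ν₁ := ν₁) (ν₂ := ν₂) (hlip x)
    (hlip y).continuous.aemeasurable (.of_forall fun z => hG2 z x y)
  rw [ENNReal.ofReal_mul' (dTheta_nonneg hθ x y), mul_right_comm] at hbound
  refine (ENNReal.div_le_div_right hbound _).trans ?_
  rw [ENNReal.add_div]
  gcongr
  -- `a * d / d ≤ a` also when `d = 0`, so the diagonal `x = y` needs no separate case.
  exact ENNReal.div_le_of_le_mul le_rfl

theorem pushed_path_lipschitz_bound_general {θ : ℝ} (hθ0 : 0 < θ) (hθ1 : θ < 1)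
    {m : Measure (SigmaA N A)} [SFinite m] {G : SigmaA N A × K → K} {α H : ℝ} (hα : α ≤ 1)
    (hG1 : CondG1 G α) (hG2 : CondG2 θ G H) {T : SigmaA N A → Measure K}
    (hT : ∀ᵐ γ ∂m, IsFiniteMeasure (T γ)) :
    pathLip m θ (fun γ => (T γ).map fun z => G (γ, z)) ≤
      pathLip m θ T + ENNReal.ofReal H * essSup (fun γ => wDist (T γ) 0) m := by
  have ratio_le : ∀ᵐ p ∂m.prod m,
      wDist (T p.1) (T p.2) / ENNReal.ofReal (dTheta θ p.1 p.2) ≤ pathLip m θ T :=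
    ENNReal.ae_le_essSup _
  have norm_le : ∀ᵐ γ ∂m, wDist (T γ) 0 ≤ essSup (fun γ => wDist (T γ) 0) m :=
    ENNReal.ae_le_essSup _
  have snd_quasi : Measure.QuasiMeasurePreserving Prod.snd (m.prod m) m :=
    Measure.quasiMeasurePreserving_snd
  refine essSup_le_of_ae_le _ ?_
  filter_upwards [ratio_le, snd_quasi.ae norm_le, snd_quasi.ae hT]
    with p ratio_le_p norm_le_p finite_p
  exact (wDist_map_fiber_div_le hθ0.le hα hG1 hG2 p.1 p.2 (T p.1) (T p.2)).trans
    (add_le_add ratio_le_p (mul_le_mul_right norm_le_p _))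

end Path

/-- Under (G1) and (G2), for a positive measure
`μ ∈ L_θ^+` with disintegration (path) `T`, the image path
`μ_F(γ) = (F_γ)_*(μ|_γ)` satisfies `|μ_F|_θ ≤ |μ|_θ^ω + H ‖μ‖_∞`. -/
theorem pushed_path_lipschitz_bound
    (N : ℕ) (A : Fin N → Fin N → Bool) (hA : Aperiodic A)
    (θ : ℝ) (hθ0 : 0 < θ) (hθ1 : θ < 1)
    (m : Measure (SigmaA N A)) [IsProbabilityMeasure m]
    (hmM : IsMarkov m) (hminv : m.map shift = m)
    {K : Type*} [MetricSpace K] [CompactSpace K] [Nonempty K]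
    [MeasurableSpace K] [BorelSpace K]
    (hdiam : Metric.diam (Set.univ : Set K) = 1)
    (G : SigmaA N A × K → K) (hGm : Measurable (skew G))
    (α : ℝ) (hα0 : 0 < α) (hα1 : α < 1) (hG1 : CondG1 G α)
    (H : ℝ) (hG2 : CondG2 θ G H)
    (μ : Measure (SigmaA N A × K)) [IsFiniteMeasure μ]
    (hAC : μ.fst ≪ m) (hLtheta : lipDisint m θ μ < ⊤)
    (T : SigmaA N A → Measure K) (hT : IsDisint m μ T) :
    pathLip m θ (fun γ => (T γ).map fun z => G (γ, z)) ≤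
      pathLip m θ T + ENNReal.ofReal H * essSup (fun γ => wDist (T γ) 0) m :=
  pushed_path_lipschitz_bound_general hθ0 hθ1 hα1.le hG1 hG2 hT.ae_isFiniteMeasure

end RDS
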